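/- Let n ≥ 2, let Λ : ℕ → [0,1] be nonincreasing with Λ(0) = 1 and satisfying hypothesis H_Λ, and let μ be a probability measure on [0,1] satisfying hypothesis H_μ with density f. Then the mean field h of the one-dimensional SOM algorithm has a unique zero m★ in the open set F_n^+. -/

import Mathlib

open MeasureTheory Set Filter Topology
open scoped Classical ENNReal

noncomputable section

/-- `F_n^+` : increasingly ordered states with values in `(0,1)`. -/
def Fplus (n : ℕ) : Set (Fin n → ℝ) :=
  {m | StrictMono m ∧ ∀ i, m i ∈ Set.Ioo (0 : ℝ) 1}

/-- The Voronoi boundary points `x_0 = 0`, `x_j = (m_j + m_{j+1})/2`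
(`1 ≤ j ≤ n-1`, in 0-based indexing `x_j = (m_{j-1} + m_j)/2`), `x_n = 1`. -/
def somBnd {n : ℕ} (m : Fin n → ℝ) (j : ℕ) : ℝ :=
  if j = 0 then 0
  else if h : j < n then
    (m ⟨j - 1, lt_of_le_of_lt (Nat.sub_le j 1) h⟩ + m ⟨j, h⟩) / 2
  else 1

/-- The mean field of the one-dimensional SOM algorithm for the input density
`f` : `h_i(m) = Σ_j Λ(|i-j|) ∫_{C_j(m)} (m_i - x) f(x) dx`, where `C_j(m)` is
the `j`-th Voronoi interval of `m`. -/
def meanField {n : ℕ} (Λ : ℕ → ℝ) (f : ℝ → ℝ) (m : Fin n → ℝ) : Fin n → ℝ :=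
  fun i => ∑ j : Fin n, Λ (Nat.dist i.1 j.1) *
    ∫ x in Set.Icc (somBnd m j.1) (somBnd m (j.1 + 1)), (m i - x) * f x

/-- Hypothesis `H_Λ` : there is an integer `k₀ < (n-1)/2` with
`Λ(k₀+1) < Λ(k₀)`. -/
def HLambda (n : ℕ) (Λ : ℕ → ℝ) : Prop :=
  ∃ k₀ : ℕ, 2 * k₀ + 1 < n ∧ Λ (k₀ + 1) < Λ k₀

/-- Hypothesis `H_μ` on the density `f` : `f > 0` on `(0,1)` and `log f`
strictly concave on `(0,1)` (or `log f` concave together with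
`lim_{0+} f + lim_{1-} f > 0`). -/
def Hmu (f : ℝ → ℝ) : Prop :=
  (∀ x ∈ Set.Ioo (0 : ℝ) 1, 0 < f x) ∧
  (StrictConcaveOn ℝ (Set.Ioo (0 : ℝ) 1) (fun x => Real.log (f x)) ∨
    (ConcaveOn ℝ (Set.Ioo (0 : ℝ) 1) (fun x => Real.log (f x)) ∧
      ∃ a b : ℝ, Tendsto f (nhdsWithin 0 (Set.Ioi 0)) (nhds a) ∧
        Tendsto f (nhdsWithin 1 (Set.Iio 1)) (nhds b) ∧ 0 < a + b))

/-!
Existence holds for every distribution of the inputs whose support is `[0, 1]`. Averaging one step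
of the algorithm over the input is a monotone map on the complete lattice of nondecreasing states
with values in `[0, 1]`, so it has a fixed point by Knaster–Tarski, and its fixed points are the
zeros of the mean field. Two adjacent units that coincide at a zero must feel the same attraction
from almost every input; as `Λ (k₀ + 1) < Λ k₀`, this empties Voronoi intervals at distance `k₀` on
both sides, where more units therefore coincide, and the propagation eventually leaves the index
range.

Uniqueness is a maximum principle. If `m` and `m'` are zeros and `δ = max (m' - m)` is positive,
then `m + δ` lies above `m'` and touches it. Monotonicity makes the mean field of `m + δ`
nonpositive at the contact unit, while log-concavity of the density, in the form
`f x * f y ≤ f z * f (x + y - z)` for `z` between `x` and `y`, makes it nonnegative; one of the two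
inequalities is strict.
-/

section LogConcave

lemma add_le_add_of_concaveOn_of_mem_segment {E : Type*} [AddCommGroup E] [Module ℝ E]
    {s : Set E} {φ : E → ℝ} (hφ : ConcaveOn ℝ s φ) {x y z : E} (hx : x ∈ s) (hy : y ∈ s)
    (hz : z ∈ segment ℝ x y) : φ x + φ y ≤ φ z + φ (x + y - z) := by
  obtain ⟨a, b, ha, hb, hab, rfl⟩ := hz
  obtain rfl : b = 1 - a := by linarith
  rw [show x + y - (a • x + (1 - a) • y) = (1 - a) • x + a • y by module]
  have hz := hφ.2 hx hy ha hb hab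
  have hz' := hφ.2 hx hy hb ha (by ring)
  simp only [smul_eq_mul] at hz hz'
  linear_combination hz + hz'

lemma add_sub_mem_segment {E : Type*} [AddCommGroup E] [Module ℝ E] {x y z : E}
    (hz : z ∈ segment ℝ x y) : x + y - z ∈ segment ℝ x y := by
  obtain ⟨a, b, ha, hb, hab, rfl⟩ := hz
  obtain rfl : b = 1 - a := by linarith
  exact ⟨1 - a, a, hb, ha, by ring, by module⟩

lemma indicator_mul_indicator_le_of_concaveOn_log {E : Type*} [AddCommGroup E] [Module ℝ E]
    {s : Set E} {f : E → ℝ} (hpos : ∀ x ∈ s, 0 < f x)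
    (hlog : ConcaveOn ℝ s fun x => Real.log (f x)) {x y z : E} (hz : z ∈ segment ℝ x y) :
    s.indicator f x * s.indicator f y ≤ s.indicator f z * s.indicator f (x + y - z) := by
  have hnonneg (w : E) : 0 ≤ s.indicator f w := indicator_nonneg (fun w hw => (hpos w hw).le) w
  by_cases hx : x ∈ s
  · by_cases hy : y ∈ s
    · have hzs : z ∈ s := hlog.1.segment_subset hx hy hz
      have hzs' : x + y - z ∈ s := hlog.1.segment_subset hx hy (add_sub_mem_segment hz)
      have hsum := add_le_add_of_concaveOn_of_mem_segment hlog hx hy hz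
      rw [← Real.log_mul (hpos x hx).ne' (hpos y hy).ne',
        ← Real.log_mul (hpos z hzs).ne' (hpos _ hzs').ne'] at hsum
      simpa only [indicator_of_mem, hx, hy, hzs, hzs'] using
        (Real.log_le_log_iff (mul_pos (hpos x hx) (hpos y hy))
          (mul_pos (hpos z hzs) (hpos _ hzs'))).1 hsum
    · simpa [hy] using mul_nonneg (hnonneg z) (hnonneg (x + y - z))
  · simpa [hx] using mul_nonneg (hnonneg z) (hnonneg (x + y - z))

lemma exists_forall_le_add_mul_of_concaveOn {s : Set ℝ} {φ : ℝ → ℝ} (hφ : ConcaveOn ℝ s φ)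
    {c : ℝ} (hc : c ∈ interior s) : ∃ r, ∀ x ∈ s, φ x ≤ φ c + r * (x - c) := by
  have hderiv := hφ.neg.leftDeriv_le_rightDeriv_of_mem_interior hc
  refine ⟨-derivWithin (-φ) (Ioi c) c, fun x hx => ?_⟩
  rcases lt_trichotomy x c with hxc | rfl | hcx
  · have h := (hφ.neg.slope_le_leftDeriv_of_mem_interior hx hc hxc).trans hderiv
    rw [slope_def_field, div_le_iff₀ (sub_pos.2 hxc)] at h
    simp only [Pi.neg_apply] at h
    linarith
  · simp
  · have h := hφ.neg.rightDeriv_le_slope_of_mem_interior hc hx hcx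
    rw [slope_def_field, le_div_iff₀ (sub_pos.2 hcx)] at h
    simp only [Pi.neg_apply] at h
    linarith

lemma continuousOn_of_concaveOn_log {s : Set ℝ} (hs : IsOpen s) {f : ℝ → ℝ}
    (hpos : ∀ x ∈ s, 0 < f x) (hlog : ConcaveOn ℝ s fun x => Real.log (f x)) :
    ContinuousOn f s :=
  (hlog.continuousOn hs).rexp.congr fun x hx => (Real.exp_log (hpos x hx)).symm

lemma integrableOn_Ioo_of_concaveOn_log {a b : ℝ} {f : ℝ → ℝ} (hpos : ∀ x ∈ Ioo a b, 0 < f x)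
    (hlog : ConcaveOn ℝ (Ioo a b) fun x => Real.log (f x)) : IntegrableOn f (Ioo a b) := by
  rcases (Ioo a b).eq_empty_or_nonempty with hempty | ⟨c, hc⟩
  · simp [hempty]
  obtain ⟨r, hr⟩ := exists_forall_le_add_mul_of_concaveOn hlog (by rwa [interior_Ioo])
  refine IntegrableOn.of_bound measure_Ioo_lt_top
    ((continuousOn_of_concaveOn_log isOpen_Ioo hpos hlog).aestronglyMeasurable measurableSet_Ioo)
    (Real.exp (Real.log (f c) + |r| * (b - a))) ?_
  refine (ae_restrict_iff' measurableSet_Ioo).2 (ae_of_all _ fun x hx => ?_)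
  have hdist : |x - c| ≤ b - a := abs_le.2 ⟨by linarith [hx.1, hc.2], by linarith [hx.2, hc.1]⟩
  have hslope : r * (x - c) ≤ |r| * (b - a) :=
    (le_abs_self _).trans (abs_mul r _ ▸ mul_le_mul_of_nonneg_left hdist (abs_nonneg r))
  rw [Real.norm_of_nonneg (hpos x hx).le, ← Real.log_le_iff_le_exp (hpos x hx)]
  linarith [hr x hx]

end LogConcave

section Voronoi

variable {n : ℕ} {m m' : Fin n → ℝ} {x : ℝ}

@[simp]
lemma somBnd_zero (m : Fin n → ℝ) : somBnd m 0 = 0 := if_pos rfl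

lemma somBnd_eq_one (hn : n ≠ 0) {j : ℕ} (hj : n ≤ j) : somBnd m j = 1 := by
  rw [somBnd, if_neg (by omega), dif_neg (by omega)]

lemma somBnd_eq_midpoint {i i' : Fin n} (hi : (i : ℕ) + 1 = i') :
    somBnd m i' = (m i + m i') / 2 := by
  have hpred : (⟨i' - 1, by omega⟩ : Fin n) = i := Fin.ext (by simp [← hi])
  rw [somBnd, if_neg (by omega), dif_pos i'.2, hpred]

lemma exists_somBnd_eq_midpoint {j : ℕ} (hj : j ≠ 0) (hjn : j < n) :
    ∃ i i' : Fin n, (i : ℕ) + 1 = j ∧ (i' : ℕ) = j ∧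
      ∀ m : Fin n → ℝ, somBnd m j = (m i + m i') / 2 :=
  ⟨⟨j - 1, by omega⟩, ⟨j, hjn⟩, Nat.succ_pred hj, rfl,
    fun _ => somBnd_eq_midpoint (i' := ⟨j, hjn⟩) (Nat.succ_pred hj)⟩

lemma somBnd_le_somBnd (hle : m ≤ m') (j : ℕ) : somBnd m j ≤ somBnd m' j := by
  unfold somBnd
  split_ifs with h0 hj
  · rfl
  · linarith [hle ⟨j - 1, by omega⟩, hle ⟨j, hj⟩]
  · rfl

lemma somBnd_le_of_lt (hm : Monotone m) {j : ℕ} (hj : j ≠ 0) {i : Fin n} (hji : j ≤ i) :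
    somBnd m j ≤ m i := by
  obtain ⟨k, k', hk, hk', hmid⟩ := exists_somBnd_eq_midpoint hj (hji.trans_lt i.2)
  rw [hmid]
  linarith [hm (show k ≤ i by omega), hm (show k' ≤ i by omega)]

lemma le_somBnd_of_lt (hm : Monotone m) {j : ℕ} (hj : j < n) {i : Fin n} (hij : (i : ℕ) < j) :
    m i ≤ somBnd m j := by
  obtain ⟨k, k', hk, hk', hmid⟩ := exists_somBnd_eq_midpoint (by omega) hj
  rw [hmid]
  linarith [hm (show i ≤ k by omega), hm (show i ≤ k' by omega)]

lemma somBnd_mono_of_lt (hm : Monotone m) {j k : ℕ} (hj : j ≠ 0) (hjk : j ≤ k) (hk : k < n) :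
    somBnd m j ≤ somBnd m k := by
  rcases hjk.eq_or_lt with rfl | hlt
  · rfl
  · exact (somBnd_le_of_lt hm hj (i := ⟨j, by omega⟩) le_rfl).trans (le_somBnd_of_lt hm hk hlt)

lemma somBnd_apply_le (hm : Monotone m) {i : Fin n} (h0 : 0 ≤ m i) : somBnd m i ≤ m i := by
  by_cases hi : (i : ℕ) = 0
  · simpa [hi] using h0
  · exact somBnd_le_of_lt hm hi le_rfl

lemma apply_le_somBnd_succ (hm : Monotone m) {i : Fin n} (h1 : m i ≤ 1) :
    m i ≤ somBnd m (i + 1) := by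
  rcases lt_or_ge (i + 1 : ℕ) n with hi | hi
  · exact le_somBnd_of_lt hm hi (Nat.lt_succ_self _)
  · rwa [somBnd_eq_one (by omega) hi]

lemma somBnd_monotone (hm : Monotone m) (hm01 : ∀ i, m i ∈ Icc (0 : ℝ) 1) :
    Monotone (somBnd m) := by
  refine monotone_nat_of_le_succ fun j => ?_
  rcases lt_or_ge j n with hj | hj
  · exact (somBnd_apply_le hm (hm01 ⟨j, hj⟩).1).trans (apply_le_somBnd_succ hm (hm01 ⟨j, hj⟩).2)
  · rcases eq_or_ne n 0 with rfl | hn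
    · rcases j with - | j <;> simp [somBnd]
    · rw [somBnd_eq_one hn hj, somBnd_eq_one hn (by omega)]

lemma somBnd_mem_Icc (hm : Monotone m) (hm01 : ∀ i, m i ∈ Icc (0 : ℝ) 1) (j : ℕ) :
    somBnd m j ∈ Icc (0 : ℝ) 1 := by
  refine ⟨somBnd_zero m ▸ somBnd_monotone hm hm01 j.zero_le, ?_⟩
  calc somBnd m j ≤ somBnd m (max j (n + 1)) := somBnd_monotone hm hm01 (le_max_left _ _)
    _ = 1 := by simp [somBnd]

/-- The index of the Voronoi interval of `m` containing `x`, computed by counting the interior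
boundary points to the left of `x`, so that it makes sense for all real `m` and `x`. -/
def cellIndex (m : Fin n → ℝ) (x : ℝ) : ℕ :=
  {j ∈ Finset.Ico 1 n | somBnd m j < x}.card

lemma cellIndex_le_pred (m : Fin n → ℝ) (x : ℝ) : cellIndex m x ≤ n - 1 := by
  simpa [cellIndex] using Finset.card_filter_le (Finset.Ico 1 n) fun j => somBnd m j < x

lemma le_cellIndex_iff (hm : Monotone m) {j : ℕ} (hj : j ≠ 0) (hjn : j < n) :
    j ≤ cellIndex m x ↔ somBnd m j < x := by
  constructor
  · contrapose!
    intro hx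
    have hsub : {k ∈ Finset.Ico 1 n | somBnd m k < x} ⊆ Finset.Ico 1 j := fun k hk => by
      simp only [Finset.mem_filter, Finset.mem_Ico] at hk ⊢
      refine ⟨hk.1.1, lt_of_not_ge fun hjk => ?_⟩
      linarith [somBnd_mono_of_lt hm hj hjk hk.1.2]
    have := Finset.card_le_card hsub
    rw [Nat.card_Ico] at this
    exact this.trans_lt (by omega)
  · intro hx
    have hsub : Finset.Ico 1 (j + 1) ⊆ {k ∈ Finset.Ico 1 n | somBnd m k < x} := fun k hk => by
      simp only [Finset.mem_filter, Finset.mem_Ico] at hk ⊢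
      exact ⟨by omega, (somBnd_mono_of_lt hm (by omega) (by omega) hjn).trans_lt hx⟩
    simpa [cellIndex] using Finset.card_le_card hsub

lemma cellIndex_lt_iff (hm : Monotone m) {j : ℕ} (hj : j ≠ 0) (hjn : j < n) :
    cellIndex m x < j ↔ x ≤ somBnd m j := by
  rw [← not_le, le_cellIndex_iff hm hj hjn, not_lt]

lemma le_cellIndex_of_apply_lt (hm : Monotone m) {i : Fin n} (hx : m i < x) :
    i ≤ cellIndex m x := by
  by_cases hi : (i : ℕ) = 0
  · omega
  · exact (le_cellIndex_iff hm hi i.2).2 ((somBnd_le_of_lt hm hi le_rfl).trans_lt hx)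

lemma cellIndex_le_of_le_apply (hm : Monotone m) {i : Fin n} (hx : x ≤ m i) :
    cellIndex m x ≤ i := by
  rcases lt_or_ge (i + 1 : ℕ) n with hi | hi
  · exact Nat.lt_succ_iff.1 <| (cellIndex_lt_iff hm (Nat.succ_ne_zero _) hi).2
      (hx.trans (le_somBnd_of_lt hm hi (Nat.lt_succ_self _)))
  · exact (cellIndex_le_pred m x).trans (by omega)

lemma cellIndex_eq_of_mem_Ioc (hm : Monotone m) {k : ℕ} (hk : k < n)
    (hx : x ∈ Ioc (somBnd m k) (somBnd m (k + 1))) : cellIndex m x = k := by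
  refine le_antisymm ?_ ?_
  · rcases lt_or_ge (k + 1) n with hk' | hk'
    · exact Nat.lt_succ_iff.1 ((cellIndex_lt_iff hm k.succ_ne_zero hk').2 hx.2)
    · exact (cellIndex_le_pred m x).trans (by omega)
  · by_cases hk0 : k = 0
    · omega
    · exact (le_cellIndex_iff hm hk0 hk).2 hx.1

lemma cellIndex_antitone_left (hle : m ≤ m') (x : ℝ) : cellIndex m' x ≤ cellIndex m x :=
  Finset.card_le_card <| Finset.monotone_filter_right _ fun j _ hj =>
    (somBnd_le_somBnd hle j).trans_lt hj

lemma cellIndex_monotone (m : Fin n → ℝ) : Monotone (cellIndex m) := fun _ _ hxy =>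
  Finset.card_le_card <| Finset.monotone_filter_right _ fun _ _ hj => lt_of_lt_of_le hj hxy

lemma cellIndex_add_const (m : Fin n → ℝ) (δ x : ℝ) :
    cellIndex (fun i => m i + δ) x = cellIndex m (x - δ) := by
  unfold cellIndex
  congr 1
  refine Finset.filter_congr fun j hj => ?_
  obtain ⟨hj1, hjn⟩ := Finset.mem_Ico.1 hj
  obtain ⟨i, i', -, -, hmid⟩ := exists_somBnd_eq_midpoint (by omega) hjn
  rw [hmid, hmid, lt_sub_iff_add_lt]
  ring_nf

end Voronoi

section Update

variable {n : ℕ} {Λ : ℕ → ℝ} {m m' : Fin n → ℝ}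

/-- The strength `Λ(|i - j|)` with which the unit `i` is attracted by an input `x` lying in the
`j`-th Voronoi interval of `m`. -/
def attraction (Λ : ℕ → ℝ) (m : Fin n → ℝ) (i : Fin n) (x : ℝ) : ℝ :=
  Λ (Nat.dist i (cellIndex m x))

/-- The position of the unit `i` after one step, of learning rate one, of the SOM algorithm started
at `m` with input `x`. -/
def somUpdate (Λ : ℕ → ℝ) (m : Fin n → ℝ) (i : Fin n) (x : ℝ) : ℝ :=
  AffineMap.lineMap (m i) x (attraction Λ m i x)

lemma sub_somUpdate (i : Fin n) (x : ℝ) :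
    m i - somUpdate Λ m i x = attraction Λ m i x * (m i - x) := by
  rw [somUpdate, AffineMap.lineMap_apply_ring']
  ring

lemma lineMap_le_lineMap_of_le {a b x s t : ℝ} (hab : a ≤ b) (hs : s ∈ Icc (0 : ℝ) 1)
    (ht : t ∈ Icc (0 : ℝ) 1) (hxa : x < a → t ≤ s) (hbx : b < x → s ≤ t) :
    AffineMap.lineMap a x s ≤ AffineMap.lineMap b x t := by
  simp only [AffineMap.lineMap_apply_ring']
  rcases lt_or_ge x a with hx | hax
  · nlinarith [hxa hx, ht.2]
  rcases lt_or_ge b x with hx | hxb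
  · nlinarith [hbx hx, hs.2]
  · nlinarith [mul_nonneg (sub_nonneg.2 hs.2) (sub_nonneg.2 hax),
      mul_nonneg (sub_nonneg.2 ht.2) (sub_nonneg.2 hxb)]

lemma somUpdate_le_somUpdate (hΛ : Antitone Λ) (hΛ01 : ∀ k, Λ k ∈ Icc (0 : ℝ) 1)
    (hm : Monotone m) (hm' : Monotone m') (hle : m ≤ m') {i i' : Fin n} (hi : i ≤ i') (x : ℝ) :
    somUpdate Λ m i x ≤ somUpdate Λ m' i' x := by
  have hcell := cellIndex_antitone_left hle x
  refine lineMap_le_lineMap_of_le ((hle i).trans (hm' hi)) (hΛ01 _) (hΛ01 _) (fun hx => hΛ ?_)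
    fun hx => hΛ ?_
  · have := cellIndex_le_of_le_apply hm hx.le
    unfold Nat.dist
    omega
  · have := le_cellIndex_of_apply_lt hm' hx
    unfold Nat.dist
    omega

lemma measurable_attraction (Λ : ℕ → ℝ) (m : Fin n → ℝ) (i : Fin n) :
    Measurable (attraction Λ m i) :=
  (measurable_from_top (f := fun k => Λ (Nat.dist i k))).comp (cellIndex_monotone m).measurable

end Update

section Drift

lemma integral_lt_integral_of_forall_mem_lt {α : Type*} [MeasurableSpace α] {μ : Measure α}
    {u v : α → ℝ} (hu : Integrable u μ) (hv : Integrable v μ) (hle : u ≤ᵐ[μ] v) {s : Set α}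
    (hs : 0 < μ s) (hlt : ∀ x ∈ s, u x < v x) : ∫ x, u x ∂μ < ∫ x, v x ∂μ := by
  rw [← sub_pos, ← integral_sub hv hu, integral_pos_iff_support_of_nonneg_ae
    (hle.mono fun x hx => sub_nonneg.2 hx) (hv.sub hu)]
  exact hs.trans_le (measure_mono fun x hx => (sub_pos.2 (hlt x hx)).ne')

/-- The measure `μ` is carried by `(0, 1)` and its support is all of `[0, 1]`. This is all that the
existence of a zero requires of the distribution of the inputs. -/
structure HasUnitSupport (μ : Measure ℝ) : Prop where
  ae_mem : ∀ᵐ x ∂μ, x ∈ Ioo (0 : ℝ) 1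
  measure_Ioo_pos : ∀ {p q : ℝ}, 0 ≤ p → p < q → q ≤ 1 → 0 < μ (Ioo p q)

lemma HasUnitSupport.neZero {μ : Measure ℝ} (hμ : HasUnitSupport μ) : NeZero μ :=
  ⟨fun h => by simpa [h] using hμ.measure_Ioo_pos le_rfl one_pos le_rfl⟩

/-- The mean field of the SOM algorithm whose inputs are distributed according to the measure `μ`,
which need not have a density. -/
def drift {n : ℕ} (Λ : ℕ → ℝ) (μ : Measure ℝ) (m : Fin n → ℝ) (i : Fin n) : ℝ :=
  ∫ x, attraction Λ m i x * (m i - x) ∂μ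

variable {n : ℕ} {Λ : ℕ → ℝ} {m : Fin n → ℝ} {μ : Measure ℝ} [IsFiniteMeasure μ]

lemma integrable_attraction_mul_sub (hΛ01 : ∀ k, Λ k ∈ Icc (0 : ℝ) 1) (hμ : HasUnitSupport μ)
    (m : Fin n → ℝ) (i : Fin n) : Integrable (fun x => attraction Λ m i x * (m i - x)) μ := by
  have hid : Integrable (fun x : ℝ => x) μ := Integrable.of_mem_Icc 0 1 aemeasurable_id
    (hμ.ae_mem.mono fun _ hx => Ioo_subset_Icc_self hx)
  refine ((integrable_const (m i)).sub hid).bdd_mul (c := 1)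
    (measurable_attraction Λ m i).aestronglyMeasurable (ae_of_all _ fun x => ?_)
  exact (Real.norm_of_nonneg (hΛ01 _).1).trans_le (hΛ01 _).2

lemma attraction_eq_of_mem_Ioc (hm : Monotone m) {i k : Fin n} {x : ℝ}
    (hx : x ∈ Ioc (somBnd m k) (somBnd m (k + 1))) : attraction Λ m i x = Λ (Nat.dist i k) := by
  rw [attraction, cellIndex_eq_of_mem_Ioc hm k.2 hx]

lemma drift_neg_of_apply_eq_zero (hΛ01 : ∀ k, Λ k ∈ Icc (0 : ℝ) 1) (hΛ0 : 0 < Λ 0)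
    (hμ : HasUnitSupport μ) (hm : Monotone m) (hm01 : ∀ i, m i ∈ Icc (0 : ℝ) 1) {i : Fin n}
    (hi : m i = 0) (hcell : 0 < somBnd m (i + 1)) : drift Λ μ m i < 0 := by
  rw [← integral_zero ℝ ℝ (μ := μ)]
  refine integral_lt_integral_of_forall_mem_lt (integrable_attraction_mul_sub hΛ01 hμ m i)
    (integrable_zero _ _ _) (hμ.ae_mem.mono fun x hx => ?_)
    (hμ.measure_Ioo_pos le_rfl hcell (somBnd_mem_Icc hm hm01 _).2) fun x hx => ?_
  · exact mul_nonpos_of_nonneg_of_nonpos (hΛ01 _).1 (by linarith [hx.1])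
  · have hleft : somBnd m i ≤ 0 := hi ▸ somBnd_apply_le hm (hm01 i).1
    rw [attraction_eq_of_mem_Ioc hm ⟨hleft.trans_lt hx.1, hx.2.le⟩, Nat.dist_self]
    exact mul_neg_of_pos_of_neg hΛ0 (by linarith [hx.1])

lemma drift_pos_of_apply_eq_one (hΛ01 : ∀ k, Λ k ∈ Icc (0 : ℝ) 1) (hΛ0 : 0 < Λ 0)
    (hμ : HasUnitSupport μ) (hm : Monotone m) (hm01 : ∀ i, m i ∈ Icc (0 : ℝ) 1) {i : Fin n}
    (hi : m i = 1) (hcell : somBnd m i < 1) : 0 < drift Λ μ m i := by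
  rw [← integral_zero ℝ ℝ (μ := μ)]
  refine integral_lt_integral_of_forall_mem_lt (integrable_zero _ _ _)
    (integrable_attraction_mul_sub hΛ01 hμ m i) (hμ.ae_mem.mono fun x hx => ?_)
    (hμ.measure_Ioo_pos (somBnd_mem_Icc hm hm01 _).1 hcell le_rfl) fun x hx => ?_
  · exact mul_nonneg (hΛ01 _).1 (by linarith [hx.2])
  · have hright : 1 ≤ somBnd m (i + 1) := hi ▸ apply_le_somBnd_succ hm (hm01 i).2
    rw [attraction_eq_of_mem_Ioc hm ⟨hx.1, hx.2.le.trans hright⟩, Nat.dist_self]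
    exact mul_pos hΛ0 (by linarith [hx.2])

lemma apply_pos_of_drift_eq_zero (hΛ01 : ∀ k, Λ k ∈ Icc (0 : ℝ) 1) (hΛ0 : 0 < Λ 0)
    (hμ : HasUnitSupport μ) (hm : Monotone m) (hm01 : ∀ i, m i ∈ Icc (0 : ℝ) 1)
    (hzero : ∀ i, drift Λ μ m i = 0) (i : Fin n) : 0 < m i := by
  refine (hm01 i).1.lt_of_ne' fun hi => ?_
  obtain ⟨p, hp⟩ := {i | m i = 0}.toFinite.exists_maximal ⟨i, hi⟩
  have hp0 : m p = 0 := hp.prop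
  refine (drift_neg_of_apply_eq_zero hΛ01 hΛ0 hμ hm hm01 hp0 ?_).ne (hzero p)
  rcases lt_or_ge (p + 1 : ℕ) n with hlt | hge
  · have hsucc : 0 < m ⟨p + 1, hlt⟩ :=
      (hm01 _).1.lt_of_ne' (hp.not_prop_of_gt (Fin.mk_lt_mk.2 p.1.lt_succ_self))
    rw [somBnd_eq_midpoint (i' := ⟨p + 1, hlt⟩) rfl, hp0]
    linarith
  · simp [somBnd_eq_one (by omega) hge]

lemma apply_lt_one_of_drift_eq_zero (hΛ01 : ∀ k, Λ k ∈ Icc (0 : ℝ) 1) (hΛ0 : 0 < Λ 0)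
    (hμ : HasUnitSupport μ) (hm : Monotone m) (hm01 : ∀ i, m i ∈ Icc (0 : ℝ) 1)
    (hzero : ∀ i, drift Λ μ m i = 0) (i : Fin n) : m i < 1 := by
  refine (hm01 i).2.lt_of_ne fun hi => ?_
  obtain ⟨p, hp⟩ := {i | m i = 1}.toFinite.exists_minimal ⟨i, hi⟩
  have hp1 : m p = 1 := hp.prop
  refine (drift_pos_of_apply_eq_one hΛ01 hΛ0 hμ hm hm01 hp1 ?_).ne' (hzero p)
  by_cases hp0 : (p : ℕ) = 0
  · simp [hp0]
  · obtain ⟨i, i', hi, hi', hmid⟩ := exists_somBnd_eq_midpoint hp0 p.2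
    obtain rfl : i' = p := Fin.ext hi'
    have hpred : m i < 1 := (hm01 i).2.lt_of_ne (hp.not_prop_of_lt (by omega))
    rw [hmid, hp1]
    linarith

end Drift

section Tie

variable {n : ℕ} {Λ : ℕ → ℝ} {m : Fin n → ℝ} {μ : Measure ℝ} [IsFiniteMeasure μ]

/-- The two units adjacent to the `j`-th Voronoi boundary point, `0 < j < n`, coincide. -/
def IsTie (m : Fin n → ℝ) (j : ℕ) : Prop :=
  ∃ i i' : Fin n, (i : ℕ) + 1 = j ∧ (i' : ℕ) = j ∧ m i = m i'

lemma IsTie.lt {j : ℕ} (h : IsTie m j) : j < n := by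
  obtain ⟨-, i', -, rfl, -⟩ := h
  exact i'.2

lemma isTie_of_somBnd_succ_le (hm : Monotone m) (hm01 : ∀ i, m i ∈ Ioo (0 : ℝ) 1) (k : Fin n)
    (hk : somBnd m (k + 1) ≤ somBnd m k) : IsTie m k ∧ IsTie m (k + 1) := by
  have hleft := somBnd_apply_le hm (hm01 k).1.le
  have hright := apply_le_somBnd_succ hm (hm01 k).2.le
  constructor
  · have hk0 : (k : ℕ) ≠ 0 := fun h0 => by
      rw [h0, somBnd_zero, ← h0] at hk
      linarith [(hm01 k).1]
    obtain ⟨i, i', hi, hi', hmid⟩ := exists_somBnd_eq_midpoint hk0 k.2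
    obtain rfl : i' = k := Fin.ext hi'
    exact ⟨i, i', hi, hi', by linarith [hmid m]⟩
  · have hkn : (k + 1 : ℕ) < n := lt_of_not_ge fun hn => by
      rw [somBnd_eq_one (by omega) hn] at hk
      linarith [(hm01 k).2]
    have hmid : somBnd m (k + 1) = _ := somBnd_eq_midpoint (i' := ⟨k + 1, hkn⟩) rfl
    exact ⟨k, ⟨k + 1, hkn⟩, rfl, rfl, by linarith⟩

lemma attraction_mul_sub_le_of_tie (hΛ : Antitone Λ) (hm : Monotone m) {i i' : Fin n}
    (hi : (i : ℕ) + 1 = i') (htie : m i = m i') (x : ℝ) :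
    attraction Λ m i' x * (m i' - x) ≤ attraction Λ m i x * (m i - x) := by
  rw [← htie]
  rcases le_or_gt x (m i) with hx | hx
  · have := cellIndex_le_of_le_apply hm hx
    refine mul_le_mul_of_nonneg_right (hΛ ?_) (sub_nonneg.2 hx)
    unfold Nat.dist
    omega
  · have := le_cellIndex_of_apply_lt hm (htie ▸ hx)
    refine mul_le_mul_of_nonpos_right (hΛ ?_) (sub_nonpos.2 hx.le)
    unfold Nat.dist
    omega

/-- Two coinciding units with zero drift must feel the same attraction from almost every input, so
a Voronoi interval that distinguishes them is empty. -/
lemma isTie_of_isTie_of_apply_dist_ne (hΛ : Antitone Λ) (hΛ01 : ∀ k, Λ k ∈ Icc (0 : ℝ) 1)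
    (hμ : HasUnitSupport μ) (hm : Monotone m) (hm01 : ∀ i, m i ∈ Ioo (0 : ℝ) 1)
    (hzero : ∀ i, drift Λ μ m i = 0) {j : ℕ} (hj : IsTie m j) {k : ℕ} (hk : k < n)
    (hne : Λ (Nat.dist (j - 1) k) ≠ Λ (Nat.dist j k)) : IsTie m k ∧ IsTie m (k + 1) := by
  obtain ⟨i, i', hi, rfl, htie⟩ := hj
  rw [← hi, Nat.add_sub_cancel] at hne
  rw [hi] at hne
  refine isTie_of_somBnd_succ_le hm hm01 ⟨k, hk⟩ (le_of_not_gt fun hlt => ?_)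
  have hm01' : ∀ i, m i ∈ Icc (0 : ℝ) 1 := fun i => Ioo_subset_Icc_self (hm01 i)
  have hle := attraction_mul_sub_le_of_tie hΛ hm hi htie
  refine ((hzero i').trans (hzero i).symm).not_lt <| integral_lt_integral_of_forall_mem_lt
    (integrable_attraction_mul_sub hΛ01 hμ m i') (integrable_attraction_mul_sub hΛ01 hμ m i)
    (ae_of_all _ hle) (hμ.measure_Ioo_pos (somBnd_mem_Icc hm hm01' _).1 hlt
      (somBnd_mem_Icc hm hm01' _).2) fun x hx => (hle x).lt_of_ne ?_
  have hbnd : somBnd m i' = m i := by rw [somBnd_eq_midpoint hi, htie, add_self_div_two]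
  have hxi : m i ≠ x := by
    rintro rfl
    have hk₁ := (somBnd_monotone hm hm01').reflect_lt (hbnd ▸ hx.1)
    have hk₂ := (somBnd_monotone hm hm01').reflect_lt (hbnd ▸ hx.2)
    dsimp only at hk₁ hk₂
    omega
  have hcell : x ∈ Ioc (somBnd m (⟨k, hk⟩ : Fin n)) (somBnd m ((⟨k, hk⟩ : Fin n) + 1)) :=
    Ioo_subset_Ioc_self hx
  rw [attraction_eq_of_mem_Ioc hm hcell, attraction_eq_of_mem_Ioc hm hcell, ← htie]
  exact fun h => hne (mul_right_cancel₀ (sub_ne_zero.2 hxi) h).symm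

lemma not_of_forall_propagates {n k : ℕ} (hk : 2 * k + 1 < n) {P : ℕ → Prop}
    (hPn : ∀ j, P j → j < n) (hleft : ∀ j, P j → k < j → P (j - 1 - k) ∧ P (j - k))
    (hright : ∀ j, P j → j + k < n → P (j + k) ∧ P (j + k + 1)) (j : ℕ) : ¬P j := by
  have hlarge : ∀ d j, n ≤ j + d → P j → n ≤ j + k := by
    intro d
    induction d with
    | zero => intros; omega
    | succ d ih =>
      intro j hd hj
      by_contra! hlt
      have hfar := (hright j hj hlt).2
      have hsucc := (hleft _ hfar (by omega)).2
      have := hPn _ hfar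
      rw [show j + k + 1 - k = j + 1 by omega] at hsucc
      have := ih (j + 1) (by omega) hsucc
      omega
  intro hj
  have := hPn j hj
  have := hlarge n j (by omega) hj
  have := hlarge n _ (by omega) (hleft j hj (by omega)).1
  omega

lemma strictMono_of_drift_eq_zero (hΛ : Antitone Λ) (hΛ01 : ∀ k, Λ k ∈ Icc (0 : ℝ) 1)
    (hHΛ : HLambda n Λ) (hμ : HasUnitSupport μ) (hm : Monotone m)
    (hm01 : ∀ i, m i ∈ Ioo (0 : ℝ) 1) (hzero : ∀ i, drift Λ μ m i = 0) : StrictMono m := by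
  obtain ⟨k, hkn, hk⟩ := hHΛ
  have hno_tie := not_of_forall_propagates hkn (P := IsTie m) (fun j hj => hj.lt)
    (fun j hj hkj => by
      have h := isTie_of_isTie_of_apply_dist_ne hΛ hΛ01 hμ hm hm01 hzero hj (k := j - 1 - k)
        (by have := hj.lt; omega) (by
          rw [Nat.dist_eq_sub_of_le_right (by omega), Nat.dist_eq_sub_of_le_right (by omega),
            show j - 1 - (j - 1 - k) = k by omega, show j - (j - 1 - k) = k + 1 by omega]
          exact hk.ne')
      rwa [show j - 1 - k + 1 = j - k by omega] at h)
    (fun j hj hjn => isTie_of_isTie_of_apply_dist_ne hΛ hΛ01 hμ hm hm01 hzero hj hjn (by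
      obtain ⟨i, -, rfl, -⟩ := hj
      rw [Nat.dist_eq_sub_of_le (by omega), Nat.dist_eq_sub_of_le (by omega),
        show (i : ℕ) + 1 + k - (i + 1 - 1) = k + 1 by omega, Nat.add_sub_cancel_left]
      exact hk.ne))
  intro i i' hlt
  refine (hm hlt.le).lt_of_ne fun heq => hno_tie (i + 1) ⟨i, ⟨i + 1, by omega⟩, rfl, rfl, ?_⟩
  exact le_antisymm (hm (Fin.mk_le_mk.2 i.1.le_succ)) (heq ▸ hm (Fin.mk_le_mk.2 hlt))

end Tie

section Existence

variable {n : ℕ} {Λ : ℕ → ℝ} {μ : Measure ℝ} [IsFiniteMeasure μ]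

lemma somUpdate_mem_Icc (hΛ01 : ∀ k, Λ k ∈ Icc (0 : ℝ) 1) {m : Fin n → ℝ} {i : Fin n}
    (hm : m i ∈ Icc (0 : ℝ) 1) {x : ℝ} (hx : x ∈ Icc (0 : ℝ) 1) :
    somUpdate Λ m i x ∈ Icc (0 : ℝ) 1 :=
  (convex_Icc 0 1).lineMap_mem hm hx (hΛ01 _)

lemma integrable_somUpdate (hΛ01 : ∀ k, Λ k ∈ Icc (0 : ℝ) 1) (hμ : HasUnitSupport μ)
    (m : Fin n → ℝ) (i : Fin n) : Integrable (somUpdate Λ m i) μ :=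
  ((integrable_const (m i)).sub (integrable_attraction_mul_sub hΛ01 hμ m i)).congr <|
    ae_of_all _ fun x => by simp [← sub_somUpdate]

/-- The mean update `m ↦ (⨍ x, somUpdate Λ m i x ∂μ)ᵢ` as a monotone self-map of the complete
lattice of nondecreasing states with values in `[0, 1]`. -/
def meanUpdate (hΛ : Antitone Λ) (hΛ01 : ∀ k, Λ k ∈ Icc (0 : ℝ) 1) (hμ : HasUnitSupport μ) :
    (Fin n →o Icc (0 : ℝ) 1) →o (Fin n →o Icc (0 : ℝ) 1) where
  toFun M :=
    { toFun := fun i => ⟨⨍ x, somUpdate Λ (fun i => (M i : ℝ)) i x ∂μ,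
        haveI := hμ.neZero
        (convex_Icc 0 1).average_mem isClosed_Icc
          (hμ.ae_mem.mono fun _ hx => somUpdate_mem_Icc hΛ01 (M i).2 (Ioo_subset_Icc_self hx))
          (integrable_somUpdate hΛ01 hμ _ i)⟩
      monotone' := fun i i' hi => Subtype.mk_le_mk.2 <| by
        simp only [average_eq]
        gcongr
        · exact integrable_somUpdate hΛ01 hμ _ i
        · exact integrable_somUpdate hΛ01 hμ _ i'
        · exact fun x => somUpdate_le_somUpdate hΛ hΛ01 (fun _ _ h => M.monotone h)
            (fun _ _ h => M.monotone h) le_rfl hi x }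
  monotone' M M' hM i := Subtype.mk_le_mk.2 <| by
    simp only [average_eq]
    gcongr
    · exact integrable_somUpdate hΛ01 hμ _ i
    · exact integrable_somUpdate hΛ01 hμ _ i
    · exact fun x => somUpdate_le_somUpdate hΛ hΛ01 (fun _ _ h => M.monotone h)
        (fun _ _ h => M'.monotone h) (fun i => hM i) le_rfl x

lemma drift_eq_zero_of_average_somUpdate (hΛ01 : ∀ k, Λ k ∈ Icc (0 : ℝ) 1)
    (hμ : HasUnitSupport μ) {m : Fin n → ℝ} {i : Fin n}
    (hfix : ⨍ x, somUpdate Λ m i x ∂μ = m i) : drift Λ μ m i = 0 := by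
  have hint : ∫ x, somUpdate Λ m i x ∂μ = μ.real univ * m i := by
    rw [← measure_smul_average, hfix, smul_eq_mul]
  simp only [drift, ← sub_somUpdate]
  rw [integral_sub (integrable_const _) (integrable_somUpdate hΛ01 hμ m i), hint, integral_const,
    smul_eq_mul, sub_self]

theorem exists_mem_Fplus_drift_eq_zero (hΛ : Antitone Λ)
    (hΛ01 : ∀ k, Λ k ∈ Icc (0 : ℝ) 1) (hHΛ : HLambda n Λ) (hμ : HasUnitSupport μ) :
    ∃ m ∈ Fplus n, ∀ i, drift Λ μ m i = 0 := by
  have hΛ0 : 0 < Λ 0 := by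
    obtain ⟨k, -, hk⟩ := hHΛ
    exact (hΛ01 (k + 1)).1.trans_lt (hk.trans_le (hΛ k.zero_le))
  obtain ⟨M, hfix⟩ : ∃ M : Fin n →o Icc (0 : ℝ) 1, meanUpdate hΛ hΛ01 hμ M = M :=
    ⟨_, OrderHom.map_lfp (α := Fin n →o Icc (0 : ℝ) 1) _⟩
  let m : Fin n → ℝ := fun i => M i
  have hm : Monotone m := fun _ _ h => M.monotone h
  have hzero (i : Fin n) : drift Λ μ m i = 0 :=
    drift_eq_zero_of_average_somUpdate hΛ01 hμ (congrArg Subtype.val (DFunLike.congr_fun hfix i))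
  have hm01 (i : Fin n) : m i ∈ Ioo (0 : ℝ) 1 :=
    ⟨apply_pos_of_drift_eq_zero hΛ01 hΛ0 hμ hm (fun i => (M i).2) hzero i,
      apply_lt_one_of_drift_eq_zero hΛ01 hΛ0 hμ hm (fun i => (M i).2) hzero i⟩
  exact ⟨m, ⟨strictMono_of_drift_eq_zero hΛ hΛ01 hHΛ hμ hm hm01 hzero, hm01⟩, hzero⟩

end Existence

section InputMeasure

/-- The distribution of the inputs: the measure on `(0, 1)` with density `f`. -/
def inputMeasure (f : ℝ → ℝ) : Measure ℝ :=
  (volume.restrict (Ioo 0 1)).withDensity fun x => ENNReal.ofReal (f x)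

variable {f : ℝ → ℝ}

lemma aemeasurable_ofReal_of_concaveOn_log (hpos : ∀ x ∈ Ioo (0 : ℝ) 1, 0 < f x)
    (hlog : ConcaveOn ℝ (Ioo (0 : ℝ) 1) fun x => Real.log (f x)) :
    AEMeasurable (fun x => ENNReal.ofReal (f x)) (volume.restrict (Ioo 0 1)) :=
  (continuousOn_of_concaveOn_log isOpen_Ioo hpos hlog).aemeasurable measurableSet_Ioo
    |>.ennreal_ofReal

lemma isFiniteMeasure_inputMeasure (hpos : ∀ x ∈ Ioo (0 : ℝ) 1, 0 < f x)
    (hlog : ConcaveOn ℝ (Ioo (0 : ℝ) 1) fun x => Real.log (f x)) :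
    IsFiniteMeasure (inputMeasure f) :=
  isFiniteMeasure_withDensity_ofReal (integrableOn_Ioo_of_concaveOn_log hpos hlog).2

lemma hasUnitSupport_inputMeasure (hpos : ∀ x ∈ Ioo (0 : ℝ) 1, 0 < f x)
    (hlog : ConcaveOn ℝ (Ioo (0 : ℝ) 1) fun x => Real.log (f x)) :
    HasUnitSupport (inputMeasure f) where
  ae_mem := (withDensity_absolutelyContinuous _ _).ae_le (ae_restrict_mem measurableSet_Ioo)
  measure_Ioo_pos {p q} hp hpq hq := by
    refine pos_iff_ne_zero.2 fun h => ?_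
    rw [inputMeasure, withDensity_apply_eq_zero' (aemeasurable_ofReal_of_concaveOn_log hpos hlog),
      Measure.restrict_apply' measurableSet_Ioo] at h
    have hsub : Ioo p q ⊆ ({x | ENNReal.ofReal (f x) ≠ 0} ∩ Ioo p q) ∩ Ioo 0 1 := fun x hx => by
      have hx01 := Ioo_subset_Ioo hp hq hx
      exact ⟨⟨(ENNReal.ofReal_pos.2 (hpos x hx01)).ne', hx⟩, hx01⟩
    exact (Measure.measure_Ioo_pos volume).2 hpq |>.ne' (measure_mono_null hsub h)

lemma integral_inputMeasure (hpos : ∀ x ∈ Ioo (0 : ℝ) 1, 0 < f x)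
    (hlog : ConcaveOn ℝ (Ioo (0 : ℝ) 1) fun x => Real.log (f x)) (w : ℝ → ℝ) :
    ∫ x, w x ∂inputMeasure f = ∫ x in Ioo 0 1, f x * w x := by
  rw [inputMeasure, integral_withDensity_eq_integral_toReal_smul₀
    (aemeasurable_ofReal_of_concaveOn_log hpos hlog) (ae_of_all _ fun _ => ENNReal.ofReal_lt_top)]
  refine setIntegral_congr_fun measurableSet_Ioo fun x hx => ?_
  simp only [ENNReal.toReal_ofReal (hpos x hx).le, smul_eq_mul]

lemma integrable_inputMeasure_iff (hpos : ∀ x ∈ Ioo (0 : ℝ) 1, 0 < f x)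
    (hlog : ConcaveOn ℝ (Ioo (0 : ℝ) 1) fun x => Real.log (f x)) {w : ℝ → ℝ} :
    Integrable w (inputMeasure f) ↔ IntegrableOn (fun x => f x * w x) (Ioo 0 1) := by
  rw [inputMeasure, integrable_withDensity_iff_integrable_smul₀'
    (aemeasurable_ofReal_of_concaveOn_log hpos hlog) (ae_of_all _ fun _ => ENNReal.ofReal_lt_top)]
  refine integrableOn_congr_fun (fun x hx => ?_) measurableSet_Ioo
  simp only [ENNReal.toReal_ofReal (hpos x hx).le, smul_eq_mul]

variable {n : ℕ} {Λ : ℕ → ℝ} {m : Fin n → ℝ}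

theorem meanField_eq_drift (hΛ01 : ∀ k, Λ k ∈ Icc (0 : ℝ) 1)
    (hpos : ∀ x ∈ Ioo (0 : ℝ) 1, 0 < f x)
    (hlog : ConcaveOn ℝ (Ioo (0 : ℝ) 1) fun x => Real.log (f x)) (hm : Monotone m)
    (hm01 : ∀ i, m i ∈ Icc (0 : ℝ) 1) : meanField Λ f m = drift Λ (inputMeasure f) m := by
  funext i
  have := isFiniteMeasure_inputMeasure hpos hlog
  set w : ℝ → ℝ := fun x => f x * (attraction Λ m i x * (m i - x)) with hw
  have hmono := somBnd_monotone hm hm01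
  have hint : IntegrableOn w (Ioc 0 1) := by
    rw [integrableOn_Ioc_iff_integrableOn_Ioo, hw, ← integrable_inputMeasure_iff hpos hlog]
    exact integrable_attraction_mul_sub hΛ01 (hasUnitSupport_inputMeasure hpos hlog) m i
  have hcell (j : Fin n) : Λ (Nat.dist i j) * ∫ x in Icc (somBnd m j) (somBnd m (j + 1)),
      (m i - x) * f x = ∫ x in somBnd m j..somBnd m (j + 1), w x := by
    rw [integral_Icc_eq_integral_Ioc, ← integral_const_mul,
      intervalIntegral.integral_of_le (hmono j.1.le_succ)]
    refine setIntegral_congr_fun measurableSet_Ioc fun x hx => ?_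
    simp only [hw, attraction_eq_of_mem_Ioc hm hx]
    ring
  have hpiece (j : ℕ) : IntervalIntegrable w volume (somBnd m j) (somBnd m (j + 1)) :=
    (intervalIntegrable_iff_integrableOn_Ioc_of_le (hmono j.le_succ)).2 <|
      hint.mono_set (Ioc_subset_Ioc (somBnd_mem_Icc hm hm01 _).1 (somBnd_mem_Icc hm hm01 _).2)
  calc meanField Λ f m i = ∑ j : Fin n, ∫ x in somBnd m j..somBnd m (j + 1), w x :=
        Finset.sum_congr rfl fun j _ => hcell j
    _ = ∫ x in (0 : ℝ)..1, w x := by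
        rw [Fin.sum_univ_eq_sum_range fun j => ∫ x in somBnd m j..somBnd m (j + 1), w x,
          intervalIntegral.sum_integral_adjacent_intervals fun j _ => hpiece j, somBnd_zero,
          somBnd_eq_one (by have := i.2; omega) le_rfl]
    _ = drift Λ (inputMeasure f) m i := by
        rw [drift, integral_inputMeasure hpos hlog, intervalIntegral.integral_of_le zero_le_one,
          integral_Ioc_eq_integral_Ioo]

end InputMeasure

section Comparison

variable {n : ℕ} {Λ : ℕ → ℝ} {m m' : Fin n → ℝ} {μ : Measure ℝ} [IsFiniteMeasure μ]

lemma attraction_mul_sub_le_of_le_of_apply_eq (hΛ : Antitone Λ)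
    (hΛ01 : ∀ k, Λ k ∈ Icc (0 : ℝ) 1) (hm : Monotone m) (hm' : Monotone m') (hle : m ≤ m')
    {i : Fin n} (hi : m i = m' i) (x : ℝ) :
    attraction Λ m' i x * (m' i - x) ≤ attraction Λ m i x * (m i - x) := by
  rw [← sub_somUpdate, ← sub_somUpdate, hi]
  exact sub_le_sub_left (somUpdate_le_somUpdate hΛ hΛ01 hm hm' hle le_rfl x) _

lemma drift_le_drift_of_apply_eq (hΛ : Antitone Λ) (hΛ01 : ∀ k, Λ k ∈ Icc (0 : ℝ) 1)
    (hμ : HasUnitSupport μ) (hm : Monotone m) (hm' : Monotone m') (hle : m ≤ m') {i : Fin n}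
    (hi : m i = m' i) : drift Λ μ m' i ≤ drift Λ μ m i :=
  integral_mono (integrable_attraction_mul_sub hΛ01 hμ m' i)
    (integrable_attraction_mul_sub hΛ01 hμ m i)
    (attraction_mul_sub_le_of_le_of_apply_eq hΛ hΛ01 hm hm' hle hi)

/-- The strictness comes from the inputs between the two `j`-th boundary points: they belong to an
interval of index at least `j` for `m`, but less than `j` for `m'`. -/
lemma drift_lt_drift_of_apply_eq (hΛ : Antitone Λ) (hΛ01 : ∀ k, Λ k ∈ Icc (0 : ℝ) 1)
    (hμ : HasUnitSupport μ) (hm : Monotone m) (hm' : Monotone m') (hle : m ≤ m') {i : Fin n}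
    (hi : m i = m' i) (hi0 : 0 ≤ m i) {k : ℕ} (hk : i + k + 1 < n) (hΛk : Λ (k + 1) < Λ k)
    (hbnd : somBnd m (i + k + 1) < somBnd m' (i + k + 1)) (hbnd1 : somBnd m (i + k + 1) < 1) :
    drift Λ μ m' i < drift Λ μ m i := by
  have hle_int := attraction_mul_sub_le_of_le_of_apply_eq hΛ hΛ01 hm hm' hle hi
  have hi_le : m i ≤ somBnd m (i + k + 1) := le_somBnd_of_lt hm hk (by omega)
  refine integral_lt_integral_of_forall_mem_lt (integrable_attraction_mul_sub hΛ01 hμ m' i)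
    (integrable_attraction_mul_sub hΛ01 hμ m i) (ae_of_all _ hle_int)
    (hμ.measure_Ioo_pos (hi0.trans hi_le) (lt_min hbnd1 hbnd) (min_le_left _ _)) fun x hx => ?_
  have hcell := (le_cellIndex_iff hm (Nat.succ_ne_zero _) hk).2 hx.1
  have hcell' := (cellIndex_lt_iff hm' (Nat.succ_ne_zero _) hk).2 (hx.2.le.trans (min_le_right _ _))
  have hicell' := le_cellIndex_of_apply_lt hm' (hi ▸ hi_le.trans_lt hx.1)
  rw [← hi]
  refine mul_lt_mul_of_neg_right ?_ (sub_neg.2 (hi_le.trans_lt hx.1))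
  calc attraction Λ m i x ≤ Λ (k + 1) := hΛ (by unfold Nat.dist; omega)
    _ < Λ k := hΛk
    _ ≤ attraction Λ m' i x := hΛ (by unfold Nat.dist; omega)

end Comparison

section Translation

variable {n : ℕ} {Λ : ℕ → ℝ} {f : ℝ → ℝ}

lemma sub_mul_indicator_sub_nonneg_of_concaveOn_log {s : Set ℝ} (hpos : ∀ x ∈ s, 0 < f x)
    (hlog : ConcaveOn ℝ s fun x => Real.log (f x)) {δ : ℝ} (hδ : 0 ≤ δ) (c x : ℝ) :
    0 ≤ (c - x) * (s.indicator f (x + δ) * s.indicator f c -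
      s.indicator f (c + δ) * s.indicator f x) := by
  rcases le_total x c with hx | hx
  · have hc : c ∈ segment ℝ x (c + δ) := by
      rw [segment_eq_Icc (by linarith)]
      constructor <;> linarith
    have h := indicator_mul_indicator_le_of_concaveOn_log hpos hlog hc
    rw [show x + (c + δ) - c = x + δ by ring] at h
    exact mul_nonneg (by linarith) (by linarith)
  · have hx' : x ∈ segment ℝ c (x + δ) := by
      rw [segment_eq_Icc (by linarith)]
      constructor <;> linarith
    have h := indicator_mul_indicator_le_of_concaveOn_log hpos hlog hx'
    rw [show c + (x + δ) - x = c + δ by ring] at h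
    exact mul_nonneg_of_nonpos_of_nonpos (by linarith) (by linarith)

lemma attraction_add_const (m : Fin n → ℝ) (i : Fin n) (δ x : ℝ) :
    attraction Λ (fun i => m i + δ) i x = attraction Λ m i (x - δ) := by
  rw [attraction, attraction, cellIndex_add_const]

lemma integrable_indicator_add_const_mul (hΛ01 : ∀ k, Λ k ∈ Icc (0 : ℝ) 1)
    (hpos : ∀ x ∈ Ioo (0 : ℝ) 1, 0 < f x)
    (hlog : ConcaveOn ℝ (Ioo (0 : ℝ) 1) fun x => Real.log (f x)) (m : Fin n → ℝ) (i : Fin n)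
    (δ : ℝ) : Integrable fun x =>
      (Ioo 0 1).indicator f (x + δ) * (attraction Λ m i x * (m i - x)) := by
  have := isFiniteMeasure_inputMeasure hpos hlog
  have h := integrable_attraction_mul_sub hΛ01 (hasUnitSupport_inputMeasure hpos hlog)
    (fun i => m i + δ) i
  rw [integrable_inputMeasure_iff hpos hlog, ← integrable_indicator_iff measurableSet_Ioo] at h
  refine (h.comp_add_right δ).congr (ae_of_all _ fun x => ?_)
  simp only [indicator_mul_left, attraction_add_const, add_sub_cancel_right,
    add_sub_add_right_eq_sub]

lemma drift_add_const (hpos : ∀ x ∈ Ioo (0 : ℝ) 1, 0 < f x)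
    (hlog : ConcaveOn ℝ (Ioo (0 : ℝ) 1) fun x => Real.log (f x)) (m : Fin n → ℝ) (i : Fin n)
    (δ : ℝ) : drift Λ (inputMeasure f) (fun i => m i + δ) i =
      ∫ x, (Ioo 0 1).indicator f (x + δ) * (attraction Λ m i x * (m i - x)) := by
  rw [drift, integral_inputMeasure hpos hlog, ← integral_indicator measurableSet_Ioo,
    ← integral_add_right_eq_self _ δ]
  simp only [indicator_mul_left, attraction_add_const, add_sub_cancel_right,
    add_sub_add_right_eq_sub]

lemma indicator_mul_drift_add_const (hΛ01 : ∀ k, Λ k ∈ Icc (0 : ℝ) 1)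
    (hpos : ∀ x ∈ Ioo (0 : ℝ) 1, 0 < f x)
    (hlog : ConcaveOn ℝ (Ioo (0 : ℝ) 1) fun x => Real.log (f x)) {m : Fin n → ℝ} {i : Fin n}
    (hzero : drift Λ (inputMeasure f) m i = 0) (δ : ℝ) :
    (Ioo 0 1).indicator f (m i) * drift Λ (inputMeasure f) (fun i => m i + δ) i =
      ∫ x, attraction Λ m i x * ((m i - x) *
        ((Ioo 0 1).indicator f (x + δ) * (Ioo 0 1).indicator f (m i) -
          (Ioo 0 1).indicator f (m i + δ) * (Ioo 0 1).indicator f x)) := by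
  have hint := integrable_indicator_add_const_mul hΛ01 hpos hlog m i
  have hzero' := drift_add_const (Λ := Λ) hpos hlog m i 0
  have hint' := hint 0
  simp only [add_zero, hzero] at hzero' hint'
  calc _ = (Ioo 0 1).indicator f (m i) *
          (∫ x, (Ioo 0 1).indicator f (x + δ) * (attraction Λ m i x * (m i - x))) -
        (Ioo 0 1).indicator f (m i + δ) *
          ∫ x, (Ioo 0 1).indicator f x * (attraction Λ m i x * (m i - x)) := by
        rw [← hzero', drift_add_const hpos hlog, mul_zero, sub_zero]
    _ = _ := by
        rw [← integral_const_mul, ← integral_const_mul,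
          ← integral_sub ((hint δ).const_mul _) (hint'.const_mul _)]
        congr 1 with x
        ring

lemma drift_add_const_nonneg (hΛ01 : ∀ k, Λ k ∈ Icc (0 : ℝ) 1)
    (hpos : ∀ x ∈ Ioo (0 : ℝ) 1, 0 < f x)
    (hlog : ConcaveOn ℝ (Ioo (0 : ℝ) 1) fun x => Real.log (f x)) {m : Fin n → ℝ} {i : Fin n}
    (hi : m i ∈ Ioo (0 : ℝ) 1) (hzero : drift Λ (inputMeasure f) m i = 0) {δ : ℝ} (hδ : 0 ≤ δ) :
    0 ≤ drift Λ (inputMeasure f) (fun i => m i + δ) i := by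
  have hfi : 0 < (Ioo 0 1).indicator f (m i) := by simpa only [indicator_of_mem hi] using hpos _ hi
  rw [← mul_nonneg_iff_of_pos_left hfi, indicator_mul_drift_add_const hΛ01 hpos hlog hzero]
  exact integral_nonneg fun x =>
    mul_nonneg (hΛ01 _).1 (sub_mul_indicator_sub_nonneg_of_concaveOn_log hpos hlog hδ _ x)

lemma drift_add_const_pos (hΛ01 : ∀ k, Λ k ∈ Icc (0 : ℝ) 1)
    (hpos : ∀ x ∈ Ioo (0 : ℝ) 1, 0 < f x)
    (hlog : ConcaveOn ℝ (Ioo (0 : ℝ) 1) fun x => Real.log (f x)) {m : Fin n → ℝ} {i : Fin n}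
    (hi : m i ∈ Ioo (0 : ℝ) 1) (hzero : drift Λ (inputMeasure f) m i = 0) {δ : ℝ} (hδ : 0 < δ)
    (hiδ : m i + δ < 1) (hattr : ∀ x, m i < x → 0 < attraction Λ m i x) :
    0 < drift Λ (inputMeasure f) (fun i => m i + δ) i := by
  have hfi : 0 < (Ioo 0 1).indicator f (m i) := by simpa only [indicator_of_mem hi] using hpos _ hi
  have hint := integrable_indicator_add_const_mul hΛ01 hpos hlog m i
  rw [← mul_pos_iff_of_pos_left hfi, indicator_mul_drift_add_const hΛ01 hpos hlog hzero]
  refine (integral_zero ℝ ℝ).symm.trans_lt <|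
    integral_lt_integral_of_forall_mem_lt (integrable_zero _ _ _) ?_
      (ae_of_all _ fun x => mul_nonneg (hΛ01 _).1
        (sub_mul_indicator_sub_nonneg_of_concaveOn_log hpos hlog hδ.le _ x))
      ((Measure.measure_Ioo_pos volume).2 (max_lt hi.2 (sub_lt_self 1 hδ))) fun x hx => ?_
  · refine (((hint δ).const_mul ((Ioo 0 1).indicator f (m i))).sub
      ((hint 0).const_mul ((Ioo 0 1).indicator f (m i + δ)))).congr (ae_of_all _ fun x => ?_)
    simp only [Pi.sub_apply, add_zero]
    ring
  · obtain ⟨hix, hδx⟩ := max_lt_iff.1 hx.1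
    have hx01 : x ∈ Ioo (0 : ℝ) 1 := ⟨hi.1.trans hix, hx.2⟩
    have hxδ : x + δ ∉ Ioo (0 : ℝ) 1 := fun h => by linarith [h.2]
    have hiδ01 : m i + δ ∈ Ioo (0 : ℝ) 1 := ⟨by linarith [hi.1], hiδ⟩
    rw [indicator_of_notMem hxδ, indicator_of_mem hiδ01, indicator_of_mem hx01, zero_mul, zero_sub]
    exact mul_pos (hattr x hix) (mul_pos_of_neg_of_neg (sub_neg.2 hix)
      (neg_neg_of_pos (mul_pos (hpos _ hiδ01) (hpos x hx01))))

end Translation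

section Uniqueness

variable {n : ℕ} {Λ : ℕ → ℝ} {f : ℝ → ℝ}

lemma exists_forall_le_and_forall_gt_lt {ι α : Type*} [Finite ι] [Nonempty ι] [PartialOrder ι]
    [LinearOrder α] (u : ι → α) : ∃ i, (∀ j, u j ≤ u i) ∧ ∀ j, i < j → u j < u i := by
  obtain ⟨i₀, hi₀⟩ := Finite.exists_max u
  obtain ⟨i, hi⟩ := {i | u i = u i₀}.toFinite.exists_maximal ⟨i₀, rfl⟩
  have hi' : u i = u i₀ := hi.prop
  exact ⟨i, fun j => hi' ▸ hi₀ j, fun j hij => hi' ▸ (hi₀ j).lt_of_ne (hi.not_prop_of_gt hij)⟩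

/-- A maximum principle. At the last unit `i` where `m' - m` is maximal, `m'` touches from below
the translate of `m`. When a unit `i + k + 1` exists the comparison of the drifts of `m'` and of the
translate is strict; otherwise `i` is attracted by every input to its right, and the drift of the
translate is positive. -/
lemma le_of_drift_eq_zero (hΛ : Antitone Λ) (hΛ01 : ∀ k, Λ k ∈ Icc (0 : ℝ) 1)
    {k : ℕ} (hk : Λ (k + 1) < Λ k) (hpos : ∀ x ∈ Ioo (0 : ℝ) 1, 0 < f x)
    (hlog : ConcaveOn ℝ (Ioo (0 : ℝ) 1) fun x => Real.log (f x)) {m m' : Fin n → ℝ}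
    (hm : m ∈ Fplus n) (hm' : m' ∈ Fplus n) (hzero : ∀ i, drift Λ (inputMeasure f) m i = 0)
    (hzero' : ∀ i, drift Λ (inputMeasure f) m' i = 0) : m' ≤ m := by
  have := isFiniteMeasure_inputMeasure hpos hlog
  have hμ := hasUnitSupport_inputMeasure hpos hlog
  intro l
  by_contra! hl
  have : Nonempty (Fin n) := ⟨l⟩
  obtain ⟨i, hmax, hlast⟩ := exists_forall_le_and_forall_gt_lt fun i => m' i - m i
  set δ := m' i - m i with hδ
  have hδ0 : 0 < δ := (sub_pos.2 hl).trans_le (hmax l)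
  have htouch : m' i = m i + δ := by rw [hδ]; ring
  have hle : m' ≤ fun j => m j + δ := fun j => by linarith [hmax j]
  have hmono : Monotone fun j => m j + δ := hm.1.monotone.add_const δ
  rcases lt_or_ge (i + k + 1 : ℕ) n with hj | hj
  · obtain ⟨j, j', hij, hij', hmid⟩ := exists_somBnd_eq_midpoint (i + k).succ_ne_zero hj
    refine (drift_add_const_nonneg hΛ01 hpos hlog (hm.2 i) (hzero i) hδ0.le).not_gt <|
      (drift_lt_drift_of_apply_eq hΛ hΛ01 hμ hm'.1.monotone hmono hle htouch (hm'.2 i).1.le hj hk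
        ?_ ?_).trans_eq (hzero' i)
    · rw [hmid, hmid]
      linarith [hmax j, hlast j' (by omega)]
    · rw [hmid]
      linarith [(hm'.2 j).2, (hm'.2 j').2]
  · refine (drift_add_const_pos hΛ01 hpos hlog (hm.2 i) (hzero i) hδ0 (htouch ▸ (hm'.2 i).2)
      fun x hx => ?_).not_ge <|
      (drift_le_drift_of_apply_eq hΛ hΛ01 hμ hm'.1.monotone hmono hle htouch).trans_eq (hzero' i)
    have hicell := le_cellIndex_of_apply_lt hm.1.monotone hx
    have hcell := cellIndex_le_pred m x
    refine ((hΛ01 (k + 1)).1.trans_lt hk).trans_le (hΛ ?_)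
    unfold Nat.dist
    omega

end Uniqueness

theorem som_meanField_unique_zero_general {n : ℕ} {Λ : ℕ → ℝ} (hΛ : Antitone Λ)
    (hΛ01 : ∀ k, Λ k ∈ Icc (0 : ℝ) 1) (hHΛ : HLambda n Λ) {f : ℝ → ℝ}
    (hpos : ∀ x ∈ Ioo (0 : ℝ) 1, 0 < f x)
    (hlog : ConcaveOn ℝ (Ioo (0 : ℝ) 1) fun x => Real.log (f x)) :
    ∃! m : Fin n → ℝ, m ∈ Fplus n ∧ meanField Λ f m = 0 := by
  have := isFiniteMeasure_inputMeasure hpos hlog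
  have hdrift {m : Fin n → ℝ} (hm : m ∈ Fplus n) :
      meanField Λ f m = 0 ↔ ∀ i, drift Λ (inputMeasure f) m i = 0 := by
    rw [meanField_eq_drift hΛ01 hpos hlog hm.1.monotone fun i => Ioo_subset_Icc_self (hm.2 i)]
    exact funext_iff
  obtain ⟨m, hm, hzero⟩ :=
    exists_mem_Fplus_drift_eq_zero hΛ hΛ01 hHΛ (hasUnitSupport_inputMeasure hpos hlog)
  obtain ⟨k, -, hk⟩ := hHΛ
  refine ⟨m, ⟨hm, (hdrift hm).2 hzero⟩, fun m' ⟨hm', hzero'⟩ => le_antisymm ?_ ?_⟩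
  · exact le_of_drift_eq_zero hΛ hΛ01 hk hpos hlog hm hm' hzero ((hdrift hm').1 hzero')
  · exact le_of_drift_eq_zero hΛ hΛ01 hk hpos hlog hm' hm ((hdrift hm').1 hzero') hzero

/-- Under `H_Λ` and `H_μ`, the mean field `h` of the
one-dimensional SOM algorithm has a unique zero `m★` in `F_n^+`. -/
theorem som_meanField_unique_zero {n : ℕ} (hn : 2 ≤ n)
    (Λ : ℕ → ℝ) (hΛanti : Antitone Λ) (hΛ0 : Λ 0 = 1)
    (hΛrange : ∀ k, Λ k ∈ Set.Icc (0 : ℝ) 1) (hHΛ : HLambda n Λ)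
    (μ : Measure ℝ) [IsProbabilityMeasure μ] (f : ℝ → ℝ)
    (hdens : μ = volume.withDensity fun x => ENNReal.ofReal (f x))
    (hsupp : ∀ x, x ∉ Set.Icc (0 : ℝ) 1 → f x = 0)
    (hHμ : Hmu f) :
    ∃! m : Fin n → ℝ, m ∈ Fplus n ∧ meanField Λ f m = 0 :=
  som_meanField_unique_zero_general hΛanti hΛrange hHΛ hHμ.1 (hHμ.2.elim (·.concaveOn) (·.1))

end
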